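/- Let G be a non-cyclic finite group of order n > 1 and let q be the smallest prime divisor of n. Then (q-1)·ψ(G) < ψ(C_n). -/

import Mathlib

/-- `psi G` is the sum of the orders of all elements of the finite group `G`. -/
noncomputable def psi (G : Type*) [Group G] [Fintype G] : ℕ := ∑ x : G, orderOf x

/-- `psiC n` is the sum of the orders of all elements of the cyclic group `C_n`. -/
noncomputable def psiC (n : ℕ) : ℕ := ∑ k ∈ Finset.range n, addOrderOf (k : ZMod n)

/-!
Let `p` be the largest prime divisor of `n = |G|` and suppose that `(q - 1) ψ(G) ≥ ψ(C_n)`. Since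
`ψ(C_n) ≥ n² ∏ r / (r + 1) ≥ n² q / (p + 1)`, the product running over the primes `r ∣ n`, some
cyclic subgroup has index less than `p`. It contains every Sylow `p`-subgroup, so there is only one,
a normal cyclic subgroup `P`; let `K` be a complement. As `ψ(G) ≤ ψ(K) ψ(P)`, a non-cyclic `K` is
dealt with by induction. If `K` is cyclic, then `C = C_K(P)` is a proper subgroup of `K`, and every
`k ∈ K \ C` acts on `P` without fixed points, which forces `o(ku) ≤ o(k)` for all `u ∈ P`. Hence
`ψ(G) ≤ ψ(C) ψ(P) + |P| ψ(K)`, and both `ψ(C) / ψ(K)` and `|P| / ψ(P)` are small.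
-/

theorem psi_eq_sum_divisors (G : Type*) [Group G] [Fintype G] [IsCyclic G] :
    psi G = ∑ d ∈ (Nat.card G).divisors, d * d.totient := by
  classical
  have orderOf_mem (x : G) : orderOf x ∈ (Nat.card G).divisors :=
    Nat.mem_divisors.2 ⟨orderOf_dvd_natCard x, Nat.card_pos.ne'⟩
  rw [psi, ← Finset.sum_fiberwise_of_maps_to fun x _ ↦ orderOf_mem x]
  refine Finset.sum_congr rfl fun d hd ↦ ?_
  have card_fiber : Finset.card {x : G | orderOf x = d} = d.totient :=
    IsCyclic.card_orderOf_eq_totient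
      (Nat.card_eq_fintype_card (α := G) ▸ Nat.dvd_of_mem_divisors hd)
  rw [Finset.sum_congr rfl fun x hx ↦ (Finset.mem_filter.1 hx).2, Finset.sum_const, card_fiber,
    smul_eq_mul, mul_comm]

open Fin.CommRing in
theorem psiC_eq_psi_zmod (n : ℕ) [NeZero n] : psiC n = psi (Multiplicative (ZMod n)) := by
  have finEquiv_eq (i : Fin n) : ZMod.finEquiv n i = ((i : ℕ) : ZMod n) := by
    rw [← map_natCast (ZMod.finEquiv n), Fin.cast_val_eq_self]
  rw [psiC, psi, Finset.sum_range]
  refine Fintype.sum_equiv ((ZMod.finEquiv n).toEquiv.trans Multiplicative.ofAdd) _ _ fun i ↦ ?_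
  simp [finEquiv_eq]

theorem psiC_eq_sum_divisors (n : ℕ) : psiC n = ∑ d ∈ n.divisors, d * d.totient := by
  rcases eq_or_ne n 0 with rfl | hn
  · simp [psiC]
  · have : NeZero n := ⟨hn⟩
    rw [psiC_eq_psi_zmod, psi_eq_sum_divisors, Nat.card_congr Multiplicative.toAdd,
      Nat.card_zmod]

theorem psi_eq_psiC (G : Type*) [Group G] [Fintype G] [IsCyclic G] : psi G = psiC (Nat.card G) := by
  rw [psi_eq_sum_divisors, psiC_eq_sum_divisors]

theorem psiC_one : psiC 1 = 1 := by simp [psiC_eq_sum_divisors]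

theorem psiC_mul_of_coprime {m n : ℕ} (h : m.Coprime n) : psiC (m * n) = psiC m * psiC n := by
  simp only [psiC_eq_sum_divisors]
  rw [Nat.divisors_mul, Finset.mul_def, Finset.sum_image, Finset.sum_mul_sum, Finset.sum_product]
  · refine Finset.sum_congr rfl fun a ha ↦ Finset.sum_congr rfl fun b hb ↦ ?_
    have hab : a.Coprime b :=
      h.of_dvd (Nat.dvd_of_mem_divisors ha) (Nat.dvd_of_mem_divisors hb)
    rw [Nat.totient_mul hab, mul_mul_mul_comm]
  · exact_mod_cast h.mul_injOn_divisors

theorem psi_pos (G : Type*) [Group G] [Fintype G] : 0 < psi G :=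
  Finset.sum_pos (fun x _ ↦ orderOf_pos x) Finset.univ_nonempty

theorem psiC_le_of_dvd {m n : ℕ} (hn : n ≠ 0) (h : m ∣ n) : psiC m ≤ psiC n := by
  simp only [psiC_eq_sum_divisors]
  exact Finset.sum_le_sum_of_subset (Nat.divisors_subset_of_dvd hn h)

theorem psiC_le_sq (n : ℕ) : psiC n ≤ n ^ 2 := by
  have addOrderOf_le : ∀ k ∈ Finset.range n, addOrderOf (k : ZMod n) ≤ n := fun k hk ↦
    addOrderOf_le_of_nsmul_eq_zero (Nat.zero_lt_of_lt (Finset.mem_range.1 hk)) (by simp)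
  simpa [psiC, sq] using Finset.sum_le_card_nsmul _ _ _ addOrderOf_le

theorem psiC_prime_pow_succ {p : ℕ} (hp : p.Prime) (k : ℕ) :
    psiC (p ^ (k + 1)) = psiC (p ^ k) + p ^ (2 * k + 1) * (p - 1) := by
  simp only [psiC_eq_sum_divisors, Nat.sum_divisors_prime_pow hp, Finset.sum_range_succ _ (k + 1)]
  rw [Nat.totient_prime_pow_succ hp]
  ring

theorem psiC_prime_pow_mul_succ {p : ℕ} (hp : p.Prime) (k : ℕ) :
    psiC (p ^ k) * (p + 1) = p ^ (2 * k + 1) + 1 := by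
  induction k with
  | zero => simp [psiC_one]
  | succ k ih =>
    obtain ⟨m, rfl⟩ := Nat.exists_eq_add_of_le' hp.one_le
    rw [psiC_prime_pow_succ hp, add_mul, ih, Nat.add_sub_cancel]
    ring

theorem sub_one_mul_prime_pow_le_psiC {p k : ℕ} (hp : p.Prime) (hk : k ≠ 0) :
    (p - 1) * p ^ k ≤ psiC (p ^ k) := by
  obtain ⟨j, rfl⟩ := Nat.exists_eq_succ_of_ne_zero hk
  have pow_le : p ^ (j + 1) ≤ p ^ (2 * j + 1) := Nat.pow_le_pow_right hp.pos (by lia)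
  calc (p - 1) * p ^ (j + 1) ≤ p ^ (2 * j + 1) * (p - 1) := by rw [mul_comm]; gcongr
    _ ≤ psiC (p ^ (j + 1)) := by rw [psiC_prime_pow_succ hp]; exact Nat.le_add_left _ _

theorem mul_psiC_le_psiC_mul_prime {r m : ℕ} (hr : r.Prime) (hm : m ≠ 0) :
    (r * (r - 1) + 1) * psiC m ≤ psiC (m * r) := by
  obtain ⟨b, w, hw, rfl⟩ := Nat.exists_eq_pow_mul_and_not_dvd hm r hr.ne_one
  have hrw : r.Coprime w := hr.coprime_iff_not_dvd.2 hw
  have step : (r * (r - 1) + 1) * psiC (r ^ b) ≤ psiC (r ^ (b + 1)) :=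
    calc (r * (r - 1) + 1) * psiC (r ^ b) = psiC (r ^ b) + r * (r - 1) * psiC (r ^ b) := by ring
      _ ≤ psiC (r ^ b) + r * (r - 1) * (r ^ b) ^ 2 := by gcongr; exact psiC_le_sq _
      _ = psiC (r ^ (b + 1)) := by rw [psiC_prime_pow_succ hr]; ring
  calc (r * (r - 1) + 1) * psiC (r ^ b * w)
      = (r * (r - 1) + 1) * psiC (r ^ b) * psiC w := by
        rw [psiC_mul_of_coprime (hrw.pow_left b), mul_assoc]
    _ ≤ psiC (r ^ (b + 1)) * psiC w := by gcongr
    _ = psiC (r ^ b * w * r) := by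
        rw [← psiC_mul_of_coprime (hrw.pow_left (b + 1)), pow_succ, mul_right_comm]

theorem minFac_mul_psiC_le_of_dvd {m n : ℕ} (hn : n ≠ 0) (hmn : m ∣ n) (hne : m ≠ n) :
    (n.minFac * (n.minFac - 1) + 1) * psiC m ≤ psiC n := by
  obtain ⟨t, rfl⟩ := hmn
  obtain ⟨r, hr, s, rfl⟩ := Nat.exists_prime_and_dvd (n := t) (by rintro rfl; simp at hne)
  have minFac_le : (m * (r * s)).minFac ≤ r :=
    Nat.minFac_le_of_dvd hr.two_le (Dvd.intro s rfl |>.mul_left m)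
  calc _ ≤ (r * (r - 1) + 1) * psiC m := by gcongr
    _ ≤ psiC (m * r) := mul_psiC_le_psiC_mul_prime hr (left_ne_zero_of_mul hn)
    _ ≤ psiC (m * (r * s)) := psiC_le_of_dvd hn ⟨s, (mul_assoc m r s).symm⟩

theorem prod_Icc_div_succ {q p : ℕ} (hq : q ≠ 0) (h : q ≤ p) :
    ∏ i ∈ Finset.Icc q p, (i / (i + 1) : ℚ) = q / (p + 1) := by
  induction p, h using Nat.le_induction with
  | base => simp
  | succ p hqp ih =>
    rw [← Finset.insert_Icc_right_eq_Icc_add_one (by lia), Finset.prod_insert (by simp), ih]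
    push_cast
    field_simp

theorem sq_mul_prod_primeFactors_le_psiC (n : ℕ) :
    (n : ℚ) ^ 2 * ∏ r ∈ n.primeFactors, (r / (r + 1) : ℚ) ≤ psiC n := by
  rcases eq_or_ne n 0 with rfl | hn
  · simp
  have prime_pow_le {r : ℕ} (hr : r.Prime) (k : ℕ) :
      ((r : ℚ) ^ k) ^ 2 * (r / (r + 1)) ≤ psiC (r ^ k) := by
    have closed_form : (psiC (r ^ k) : ℚ) * (r + 1) = r ^ (2 * k + 1) + 1 := by
      exact_mod_cast psiC_prime_pow_mul_succ hr k
    rw [← mul_div_assoc, div_le_iff₀ (by positivity), closed_form]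
    linarith [show ((r : ℚ) ^ k) ^ 2 * r = r ^ (2 * k + 1) by ring]
  have prod_pow : (n : ℚ) = ∏ r ∈ n.primeFactors, (r : ℚ) ^ n.factorization r := by
    exact_mod_cast (Nat.prod_factorization_pow_eq_self hn).symm
  have psiC_prod : (psiC n : ℚ) = ∏ r ∈ n.primeFactors, (psiC (r ^ n.factorization r) : ℚ) := by
    exact_mod_cast Nat.multiplicative_factorization psiC (fun _ _ ↦ psiC_mul_of_coprime) psiC_one hn
  calc (n : ℚ) ^ 2 * ∏ r ∈ n.primeFactors, (r / (r + 1) : ℚ)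
      = ∏ r ∈ n.primeFactors, ((r : ℚ) ^ n.factorization r) ^ 2 * (r / (r + 1)) := by
        rw [Finset.prod_mul_distrib, Finset.prod_pow, ← prod_pow]
    _ ≤ ∏ r ∈ n.primeFactors, (psiC (r ^ n.factorization r) : ℚ) :=
        Finset.prod_le_prod (fun _ _ ↦ by positivity) fun r hr ↦
          prime_pow_le (Nat.prime_of_mem_primeFactors hr) _
    _ = psiC n := psiC_prod.symm

theorem minFac_mul_sq_le_psiC {n p : ℕ} (hn : 1 < n) (hp : ∀ r ∈ n.primeFactors, r ≤ p) :
    n.minFac * n ^ 2 ≤ (p + 1) * psiC n := by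
  have minFac_le : n.minFac ≤ p :=
    hp _ (Nat.mem_primeFactors.2 ⟨Nat.minFac_prime hn.ne', n.minFac_dvd, by lia⟩)
  have subset_Icc : n.primeFactors ⊆ Finset.Icc n.minFac p := fun r hr ↦
    have hr' := Nat.prime_of_mem_primeFactors hr
    Finset.mem_Icc.2
      ⟨Nat.minFac_le_of_dvd hr'.two_le (Nat.dvd_of_mem_primeFactors hr), hp r hr⟩
  have lower : (n : ℚ) ^ 2 * (n.minFac / (p + 1)) ≤ psiC n :=
    calc (n : ℚ) ^ 2 * (n.minFac / (p + 1))
        = n ^ 2 * ∏ i ∈ Finset.Icc n.minFac p, (i / (i + 1) : ℚ) := by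
          rw [prod_Icc_div_succ (Nat.minFac_pos n).ne' minFac_le]
      _ ≤ n ^ 2 * ∏ r ∈ n.primeFactors, (r / (r + 1) : ℚ) := by
          gcongr (n : ℚ) ^ 2 * ?_
          refine Finset.prod_le_prod_of_subset_of_le_one subset_Icc (fun i _ ↦ by positivity) ?_
          exact fun i _ _ ↦ div_le_one_of_le₀ (by linarith) (by positivity)
      _ ≤ psiC n := sq_mul_prod_primeFactors_le_psiC n
  rw [← mul_div_assoc, div_le_iff₀ (by positivity)] at lower
  exact_mod_cast (by linarith : (n.minFac : ℚ) * n ^ 2 ≤ (p + 1) * psiC n)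

theorem sub_one_mul_add_lt_mul {q a b c N : ℕ} (ha : 0 < a) (hb : 0 < b)
    (hc : (q * (q - 1) + 1) * c ≤ b) (hN : q * N ≤ a) : (q - 1) * (c * a + N * b) < b * a := by
  rcases q with _ | t
  · simpa using ⟨hb, ha⟩
  rw [Nat.add_sub_cancel] at hc ⊢
  refine lt_of_mul_lt_mul_left (a := ((t + 1) * t + 1) * (t + 1)) ?_ (Nat.zero_le _)
  calc ((t + 1) * t + 1) * (t + 1) * (t * (c * a + N * b))
      = (t + 1) * t * a * (((t + 1) * t + 1) * c) +
          ((t + 1) * t + 1) * t * b * ((t + 1) * N) := by ring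
    _ ≤ (t + 1) * t * a * b + ((t + 1) * t + 1) * t * b * a := by gcongr
    _ < (t + 1) * t * a * b + ((t + 1) * t + 1) * t * b * a + b * a :=
      Nat.lt_add_of_pos_right (Nat.mul_pos hb ha)
    _ = ((t + 1) * t + 1) * (t + 1) * (b * a) := by ring

section GroupTheory

open Subgroup

theorem mulAut_eq_one_or_fixedPointFree {P : Type*} [Group P] [Finite P] [IsCyclic P] {p : ℕ}
    [Fact p.Prime] (hP : IsPGroup p P) (φ : MulAut P) (hφ : (orderOf φ).Coprime (Nat.card P)) :
    φ = 1 ∨ MonoidHom.FixedPointFree φ := by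
  let χ : MulAut P →* ZMod (Nat.card P) :=
    MulDistribMulAction.toMonoidHomZModOfIsCyclic P (MulAut P) rfl
  obtain ⟨m, hm⟩ := ZMod.intCast_surjective (χ φ - 1)
  have apply_eq (g : P) : φ g = g ^ m * g := by
    rw [← zpow_add_one]
    refine MulDistribMulAction.toMonoidHomZModOfIsCyclic_apply rfl φ g (m + 1) ?_
    push_cast
    exact sub_eq_iff_eq_add.1 hm.symm
  have orderOf_dvd_card (g : P) : (orderOf g : ℤ) ∣ Nat.card P :=
    Int.natCast_dvd_natCast.2 (orderOf_dvd_natCard g)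
  obtain ⟨a, ha⟩ := hP.exists_card_eq
  rcases ZMod.eq_one_or_isUnit_sub_one ha (χ φ) (hφ.coprime_dvd_left (orderOf_map_dvd χ φ))
    with eq_one | isUnit_sub_one
  · have card_dvd : (Nat.card P : ℤ) ∣ m := by
      rwa [← ZMod.intCast_zmod_eq_zero_iff_dvd, hm, sub_eq_zero]
    refine .inl (MulEquiv.ext fun g ↦ ?_)
    rw [apply_eq, orderOf_dvd_iff_zpow_eq_one.1 ((orderOf_dvd_card g).trans card_dvd), one_mul,
      MulAut.one_apply]
  · have coprime : IsCoprime (Nat.card P : ℤ) m := by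
      rwa [← ZMod.coe_int_isUnit_iff_isCoprime, hm]
    refine .inr fun g hg ↦ orderOf_eq_one_iff.1 ?_
    have orderOf_dvd : (orderOf g : ℤ) ∣ m := by
      rwa [orderOf_dvd_iff_zpow_eq_one, ← mul_eq_right (b := g), ← apply_eq]
    exact Nat.isUnit_iff.1
      (Int.ofNat_isUnit.1 (coprime.isUnit_of_dvd' (orderOf_dvd_card g) orderOf_dvd))

variable {G : Type*} [Group G]

theorem mem_centralizer_or_pow_eq_one {P : Subgroup G} [P.Normal] [Finite P] [IsCyclic P] {p : ℕ}
    [Fact p.Prime] (hP : IsPGroup p P) {x : G} {m : ℕ} (hm : m.Coprime (Nat.card P))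
    (hx : x ^ m ∈ P) : x ∈ centralizer P ∨ x ^ m = 1 := by
  have conj_pow_eq_one : (MulAut.conjNormal x : MulAut P) ^ m = 1 := by
    ext u
    have commute : x ^ m * u = u * x ^ m := congrArg Subtype.val (mul_comm' (⟨_, hx⟩ : P) u)
    rw [← map_pow, MulAut.conjNormal_apply, commute, mul_inv_cancel_right, MulAut.one_apply]
  rcases mulAut_eq_one_or_fixedPointFree hP (MulAut.conjNormal x)
    (hm.coprime_dvd_left (orderOf_dvd_of_pow_eq_one conj_pow_eq_one)) with eq_one | fixedPointFree
  · refine .inl (mem_centralizer_iff.2 fun u hu ↦ ?_)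
    have conj_eq : x * u * x⁻¹ = u := by
      rw [← MulAut.conjNormal_apply x (⟨u, hu⟩ : P), eq_one, MulAut.one_apply]
    exact (mul_inv_eq_iff_eq_mul.1 conj_eq).symm
  · have fixed : MulAut.conjNormal x (⟨x ^ m, hx⟩ : P) = ⟨x ^ m, hx⟩ :=
      Subtype.ext (by rw [MulAut.conjNormal_apply, ← pow_succ', pow_succ, mul_inv_cancel_right])
    exact .inr (congrArg Subtype.val (fixedPointFree _ fixed))

theorem normal_zpowers_of_mem {P : Subgroup G} [P.Normal] [IsCyclic P] {u : G} (hu : u ∈ P) :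
    (zpowers u).Normal := by
  refine ⟨fun x hx g ↦ ?_⟩
  obtain ⟨m, hm⟩ := MonoidHom.map_cyclic (MulAut.conjNormal g : MulAut P).toMonoidHom
  have conj_eq : g * x * g⁻¹ = x ^ m := by
    simpa using congrArg Subtype.val (hm ⟨x, zpowers_le.2 hu hx⟩)
  exact conj_eq ▸ zpow_mem hx m

theorem mul_pow_orderOf_mem {N : Subgroup G} [N.Normal] (k : G) {u : G} (hu : u ∈ N) :
    (k * u) ^ orderOf k ∈ N := by
  rw [← QuotientGroup.eq_one_iff, QuotientGroup.mk_pow, QuotientGroup.mk_mul,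
    (QuotientGroup.eq_one_iff u).2 hu, mul_one, ← QuotientGroup.mk_pow, pow_orderOf_eq_one,
    QuotientGroup.mk_one]

theorem orderOf_mul_dvd_of_normal_zpowers (k u : G) [(zpowers u).Normal] :
    orderOf (k * u) ∣ orderOf k * orderOf u := by
  rw [orderOf_dvd_iff_pow_eq_one, pow_mul, ← orderOf_dvd_iff_pow_eq_one]
  exact orderOf_dvd_of_mem_zpowers (mul_pow_orderOf_mem k (mem_zpowers u))

theorem sum_orderOf_mul_le {P : Subgroup G} [P.Normal] [Fintype P] [IsCyclic P] {k : G}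
    (hk : IsOfFinOrder k) : ∑ u : P, orderOf (k * u) ≤ orderOf k * psi P := by
  rw [psi, Finset.mul_sum]
  refine Finset.sum_le_sum fun u _ ↦ Nat.le_of_dvd (Nat.mul_pos hk.orderOf_pos (orderOf_pos u)) ?_
  have := normal_zpowers_of_mem u.2
  rw [← orderOf_coe u]
  exact orderOf_mul_dvd_of_normal_zpowers k u

theorem orderOf_mul_le_of_notMem_centralizer {P : Subgroup G} [P.Normal] [Finite P] [IsCyclic P]
    {p : ℕ} [Fact p.Prime] (hP : IsPGroup p P) {k u : G} (hk : IsOfFinOrder k)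
    (hcop : (orderOf k).Coprime (Nat.card P)) (hkP : k ∉ centralizer P) (hu : u ∈ P) :
    orderOf (k * u) ≤ orderOf k := by
  have mul_notMem : k * u ∉ centralizer P := by
    rwa [Subgroup.mul_mem_cancel_right _ (le_centralizer P hu)]
  have mul_pow_eq_one : (k * u) ^ orderOf k = 1 :=
    (mem_centralizer_or_pow_eq_one hP hcop (mul_pow_orderOf_mem k hu)).resolve_left mul_notMem
  exact orderOf_le_of_pow_eq_one hk.orderOf_pos mul_pow_eq_one

theorem psi_subgroup_eq_sum [Fintype G] (H : Subgroup G) [Fintype H] [DecidablePred (· ∈ H)] :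
    psi H = ∑ x : G, if x ∈ H then orderOf x else 0 := by
  simp only [psi, ← orderOf_coe]
  rw [← Finset.sum_filter]
  exact (Finset.sum_subtype _ (by simp) _).symm

section Complement

variable {K P : Subgroup G}

theorem psi_eq_sum_sum [Fintype G] [Fintype K] [Fintype P] (hKP : K.IsComplement' P) :
    psi G = ∑ k : K, ∑ u : P, orderOf (k * u : G) := by
  rw [psi, ← Fintype.sum_prod_type']
  refine Fintype.sum_equiv hKP.equiv _ _ fun g ↦ ?_
  rw [IsComplement.equiv_fst_mul_equiv_snd]

theorem psi_le_psi_mul_psi [Fintype G] [Fintype K] [Fintype P] [P.Normal] [IsCyclic P]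
    (hKP : K.IsComplement' P) : psi G ≤ psi K * psi P := by
  calc psi G = ∑ k : K, ∑ u : P, orderOf (k * u : G) := psi_eq_sum_sum hKP
    _ ≤ ∑ k : K, orderOf (k : G) * psi P :=
      Finset.sum_le_sum fun k _ ↦ sum_orderOf_mul_le (isOfFinOrder_of_finite (k : G))
    _ = psi K * psi P := by simp only [orderOf_coe, psi, Finset.sum_mul]

theorem isCyclic_of_isComplement'_of_le_centralizer [Finite G] [IsCyclic K] [IsCyclic P]
    (hKP : K.IsComplement' P) (hcop : (Nat.card K).Coprime (Nat.card P))
    (hcomm : K ≤ centralizer P) : IsCyclic G := by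
  obtain ⟨k, hk⟩ := IsCyclic.exists_ofOrder_eq_natCard (α := K)
  obtain ⟨u, hu⟩ := IsCyclic.exists_ofOrder_eq_natCard (α := P)
  have commute : Commute (k : G) u := (mem_centralizer_iff.1 (hcomm k.2) u u.2).symm
  rw [← orderOf_coe] at hk hu
  refine isCyclic_of_orderOf_eq_card (k * u : G) ?_
  rw [commute.orderOf_mul_eq_mul_orderOf_of_coprime (by rwa [hk, hu]), hk, hu, hKP.card_mul_card]

theorem psi_le_psi_centralizer [Fintype G] [Fintype K] [Fintype P]
    [Fintype ((centralizer (P : Set G)).subgroupOf K)] [P.Normal] [IsCyclic P] {p : ℕ}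
    [Fact p.Prime] (hP : IsPGroup p P) (hKP : K.IsComplement' P)
    (hcop : (Nat.card K).Coprime (Nat.card P)) :
    psi G ≤ psi ((centralizer (P : Set G)).subgroupOf K) * psi P + Nat.card P * psi K := by
  classical
  have inner_sum_le (k : K) : ∑ u : P, orderOf (k * u : G) ≤
      (if k ∈ (centralizer (P : Set G)).subgroupOf K then orderOf k else 0) * psi P +
        Nat.card P * orderOf k := by
    have hk := isOfFinOrder_of_finite (k : G)
    rw [← orderOf_coe k]
    split_ifs with hkC
    · exact (sum_orderOf_mul_le hk).trans (Nat.le_add_right _ _)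
    · have orderOf_mul_le (u : P) : orderOf (k * u : G) ≤ orderOf (k : G) :=
        orderOf_mul_le_of_notMem_centralizer hP hk
          (hcop.coprime_dvd_left (K.orderOf_dvd_natCard k.2)) hkC u.2
      simpa using Finset.sum_le_card_nsmul Finset.univ _ _ fun u _ ↦ orderOf_mul_le u
  calc psi G = ∑ k : K, ∑ u : P, orderOf (k * u : G) := psi_eq_sum_sum hKP
    _ ≤ ∑ k : K, ((if k ∈ (centralizer (P : Set G)).subgroupOf K then orderOf k else 0) * psi P +
        Nat.card P * orderOf k) := Finset.sum_le_sum fun k _ ↦ inner_sum_le k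
    _ = psi ((centralizer (P : Set G)).subgroupOf K) * psi P + Nat.card P * psi K := by
      rw [Finset.sum_add_distrib, ← Finset.sum_mul, ← Finset.mul_sum, ← psi_subgroup_eq_sum, ← psi]

theorem mul_psi_lt_psiC_of_isComplement' [Fintype G] [Fintype K] [P.Normal] [IsCyclic P]
    (hKP : K.IsComplement' P) (hcop : (Nat.card K).Coprime (Nat.card P)) {c : ℕ}
    (hK : c * psi K < psiC (Nat.card K)) : c * psi G < psiC (Nat.card G) := by
  have := Fintype.ofFinite P
  calc c * psi G ≤ c * (psi K * psi P) := by gcongr; exact psi_le_psi_mul_psi hKP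
    _ = c * psi K * psi P := (mul_assoc _ _ _).symm
    _ < psiC (Nat.card K) * psi P := by gcongr; exact psi_pos P
    _ = psiC (Nat.card G) := by
      rw [psi_eq_psiC P, ← psiC_mul_of_coprime hcop, hKP.card_mul_card]

theorem mul_psi_lt_psiC_of_isCyclic [Fintype G] [P.Normal] [IsCyclic P] [Nontrivial P] [IsCyclic K]
    {p : ℕ} [Fact p.Prime] (hG : ¬ IsCyclic G) (hP : IsPGroup p P) (hKP : K.IsComplement' P)
    (hcop : (Nat.card K).Coprime (Nat.card P)) (hK : (Nat.card K).minFac < p) :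
    ((Nat.card K).minFac - 1) * psi G < psiC (Nat.card G) := by
  have := Fintype.ofFinite K
  have := Fintype.ofFinite P
  let C := (centralizer (P : Set G)).subgroupOf K
  have := Fintype.ofFinite C
  have C_ne_top : C ≠ ⊤ := fun h ↦
    hG (isCyclic_of_isComplement'_of_le_centralizer hKP hcop (subgroupOf_eq_top.1 h))
  have mul_psi_C_le : ((Nat.card K).minFac * ((Nat.card K).minFac - 1) + 1) * psi C ≤ psi K := by
    rw [psi_eq_psiC C, psi_eq_psiC K]
    exact minFac_mul_psiC_le_of_dvd Nat.card_pos.ne' C.card_subgroup_dvd_card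
      (C_ne_top ∘ C.eq_top_of_card_eq)
  have mul_card_P_le : (Nat.card K).minFac * Nat.card P ≤ psi P := by
    obtain ⟨a, ha, card_P⟩ := hP.nontrivial_iff_card.1 ‹_›
    rw [psi_eq_psiC P, card_P]
    calc (Nat.card K).minFac * p ^ a ≤ (p - 1) * p ^ a := by gcongr; exact Nat.le_sub_one_of_lt hK
      _ ≤ psiC (p ^ a) := sub_one_mul_prime_pow_le_psiC Fact.out ha.ne'
  calc ((Nat.card K).minFac - 1) * psi G
      ≤ ((Nat.card K).minFac - 1) * (psi C * psi P + Nat.card P * psi K) := by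
        gcongr; exact psi_le_psi_centralizer hP hKP hcop
    _ < psi K * psi P :=
      sub_one_mul_add_lt_mul (psi_pos P) (psi_pos K) mul_psi_C_le mul_card_P_le
    _ = psiC (Nat.card G) := by
      rw [psi_eq_psiC K, psi_eq_psiC P, ← psiC_mul_of_coprime hcop, hKP.card_mul_card]

theorem minFac_sub_one_mul_psi_lt_psiC_of_isComplement' [Fintype G] [Fintype K] [P.Normal]
    [IsCyclic P] {p : ℕ} [Fact p.Prime] (hG : ¬ IsCyclic G)
    (hp : ∀ r ∈ (Nat.card G).primeFactors, r ≤ p) (hP : IsPGroup p P) (hpP : p ∣ Nat.card P)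
    (hKP : K.IsComplement' P) (hcop : (Nat.card K).Coprime (Nat.card P))
    (hK : ¬ IsCyclic K → ((Nat.card K).minFac - 1) * psi K < psiC (Nat.card K)) :
    ((Nat.card G).minFac - 1) * psi G < psiC (Nat.card G) := by
  have p_prime : p.Prime := Fact.out
  have card_K_ne_one : Nat.card K ≠ 1 := fun h ↦ by
    obtain rfl := K.card_eq_one.1 h
    exact hG (isCyclic_of_isComplement'_of_le_centralizer hKP hcop bot_le)
  have minFac_prime := Nat.minFac_prime card_K_ne_one
  have minFac_dvd : (Nat.card K).minFac ∣ Nat.card G :=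
    (Nat.minFac_dvd _).trans K.card_subgroup_dvd_card
  have minFac_ne : (Nat.card K).minFac ≠ p := fun h ↦
    Nat.not_coprime_of_dvd_of_dvd p_prime.one_lt (h ▸ Nat.minFac_dvd _) hpP hcop
  have minFac_lt : (Nat.card K).minFac < p :=
    (hp _ (Nat.mem_primeFactors.2 ⟨minFac_prime, minFac_dvd, Nat.card_pos.ne'⟩)).lt_of_ne minFac_ne
  calc ((Nat.card G).minFac - 1) * psi G ≤ ((Nat.card K).minFac - 1) * psi G := by
        gcongr; exact Nat.minFac_le_of_dvd minFac_prime.two_le minFac_dvd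
    _ < psiC (Nat.card G) := by
      by_cases hKc : IsCyclic K
      · have one_lt_card_P := p_prime.one_lt.trans_le (Nat.le_of_dvd Nat.card_pos hpP)
        have : Nontrivial P := Finite.one_lt_card_iff_nontrivial.1 one_lt_card_P
        exact mul_psi_lt_psiC_of_isCyclic hG hP hKP hcop minFac_lt
      · exact mul_psi_lt_psiC_of_isComplement' hKP hcop (hK hKc)

end Complement

theorem le_of_isPGroup_of_index_lt {p : ℕ} [Fact p.Prime] {P H : Subgroup G} [H.FiniteIndex]
    (hP : IsPGroup p P) (hH : H.index < p) : P ≤ H := by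
  obtain ⟨n, hn⟩ := hP.index (H.subgroupOf P)
  have relIndex_le : H.relIndex P ≤ H.index := by
    rw [← relIndex_top_right] at hH ⊢
    exact relIndex_le_of_le_right le_top (by simpa using FiniteIndex.index_ne_zero)
  have pow_lt : p ^ n < p ^ 1 := by rw [← hn, pow_one]; exact relIndex_le.trans_lt hH
  have n_eq : n = 0 := by
    simpa using (Nat.pow_lt_pow_iff_right (Fact.out : p.Prime).one_lt).1 pow_lt
  rw [← relIndex_eq_one, relIndex, hn, n_eq, pow_zero]

theorem sylow_normal_of_index_lt {p : ℕ} [Fact p.Prime] {H : Subgroup G} [H.FiniteIndex]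
    [IsMulCommutative H] (hH : H.index < p) (P : Sylow p G) : P.Normal := by
  have le_H (Q : Sylow p G) : Q ≤ H := le_of_isPGroup_of_index_lt Q.isPGroup' hH
  have le_normalizer (Q R : Sylow p G) : Q ≤ normalizer (R : Set G) :=
    calc (Q : Subgroup G) ≤ H := le_H Q
      _ ≤ centralizer H := le_centralizer H
      _ ≤ centralizer R := centralizer_le (le_H R)
      _ ≤ normalizer (R : Set G) := centralizer_le_normalizer _
  have le (Q R : Sylow p G) : (Q : Subgroup G) ≤ R := by
    have := Q.isPGroup'.inf_normalizer_sylow R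
    rwa [inf_eq_left.2 (le_normalizer Q R), left_eq_inf] at this
  have : Subsingleton (Sylow p G) := ⟨fun Q R ↦ Sylow.ext (le_antisymm (le Q R) (le R Q))⟩
  exact P.normal_of_subsingleton

theorem exists_psi_le_card_mul_orderOf (G : Type*) [Group G] [Fintype G] :
    ∃ x : G, psi G ≤ Nat.card G * orderOf x := by
  obtain ⟨x, -, hx⟩ := Finset.exists_max_image Finset.univ (orderOf : G → ℕ) Finset.univ_nonempty
  exact ⟨x, by simpa [psi] using Finset.sum_le_card_nsmul _ _ _ hx⟩

theorem exists_index_zpowers_lt [Fintype G] [Nontrivial G] {p : ℕ}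
    (hp : ∀ r ∈ (Nat.card G).primeFactors, r ≤ p)
    (hG : psiC (Nat.card G) ≤ ((Nat.card G).minFac - 1) * psi G) :
    ∃ x : G, (zpowers x).index < p := by
  obtain ⟨x, hx⟩ := exists_psi_le_card_mul_orderOf G
  refine ⟨x, ?_⟩
  obtain ⟨t, ht⟩ := Nat.exists_eq_add_of_le' (Nat.card G).minFac_pos
  have minFac_le : t + 1 ≤ p := ht ▸ hp _ (Nat.mem_primeFactors.2
    ⟨Nat.minFac_prime Finite.one_lt_card.ne', Nat.minFac_dvd _, Nat.card_pos.ne'⟩)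
  have lower := minFac_mul_sq_le_psiC Finite.one_lt_card hp
  rw [ht] at lower hG
  rw [Nat.add_sub_cancel] at hG
  have card_eq : orderOf x * (zpowers x).index = Nat.card G := by
    rw [← Nat.card_zpowers, card_mul_index]
  have le : (t + 1) * (zpowers x).index ≤ (p + 1) * t := by
    refine le_of_mul_le_mul_left (a := Nat.card G * orderOf x) ?_
      (Nat.mul_pos Nat.card_pos (orderOf_pos x))
    calc Nat.card G * orderOf x * ((t + 1) * (zpowers x).index)
        = (t + 1) * (Nat.card G * (orderOf x * (zpowers x).index)) := by ring
      _ = (t + 1) * Nat.card G ^ 2 := by rw [card_eq, sq]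
      _ ≤ (p + 1) * psiC (Nat.card G) := lower
      _ ≤ (p + 1) * (t * (Nat.card G * orderOf x)) := by gcongr; exact hG.trans (by gcongr)
      _ = Nat.card G * orderOf x * ((p + 1) * t) := by ring
  by_contra! hge
  have : (t + 1) * p ≤ (p + 1) * t := (Nat.mul_le_mul_left _ hge).trans le
  linarith

theorem exists_normal_cyclic_sylow [Fintype G] [Nontrivial G]
    (hG : psiC (Nat.card G) ≤ ((Nat.card G).minFac - 1) * psi G) :
    ∃ (p : ℕ) (_ : Fact p.Prime) (P : Sylow p G), P.Normal ∧ IsCyclic P ∧ p ∣ Nat.card P ∧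
      ∀ r ∈ (Nat.card G).primeFactors, r ≤ p := by
  obtain ⟨p, hpG, hp⟩ : ∃ p ∈ (Nat.card G).primeFactors, ∀ r ∈ (Nat.card G).primeFactors, r ≤ p :=
    Finset.exists_max_image _ id (Nat.nonempty_primeFactors.2 Finite.one_lt_card)
  have fact_prime : Fact p.Prime := ⟨Nat.prime_of_mem_primeFactors hpG⟩
  obtain ⟨x, hx⟩ := exists_index_zpowers_lt hp hG
  let P : Sylow p G := default
  exact ⟨p, fact_prime, P, sylow_normal_of_index_lt hx P,
    isCyclic_of_le (le_of_isPGroup_of_index_lt P.isPGroup' hx),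
    P.dvd_card_of_dvd_card (Nat.dvd_of_mem_primeFactors hpG), hp⟩

end GroupTheory

theorem sum_orders_noncyclic_lt_minFac {G : Type*} [Group G] [Fintype G] (n : ℕ)
    (hn : Fintype.card G = n) (h1 : 1 < n) (hG : ¬ IsCyclic G) :
    (n.minFac - 1) * psi G < psiC n := by
  induction n using Nat.strong_induction_on generalizing G with | _ n ih => ?_
  obtain rfl := Nat.card_eq_fintype_card.trans hn
  have : Nontrivial G := .of_not_isCyclic hG
  by_contra! hle
  obtain ⟨p, _, P, _, _, p_dvd, p_max⟩ := exists_normal_cyclic_sylow hle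
  obtain ⟨K, hKP⟩ := Subgroup.exists_left_complement'_of_coprime P.card_coprime_index
  have := Fintype.ofFinite K
  have coprime : (Nat.card K).Coprime (Nat.card P) := by
    rw [← hKP.index_eq_card]
    exact P.card_coprime_index.symm
  have one_lt_card_P : 1 < Nat.card P :=
    (Fact.out : p.Prime).one_lt.trans_le (Nat.le_of_dvd Nat.card_pos p_dvd)
  refine hle.not_gt (minFac_sub_one_mul_psi_lt_psiC_of_isComplement' hG p_max P.isPGroup'
    p_dvd hKP coprime fun hK ↦ ih _ ?_ Nat.card_eq_fintype_card.symm ?_ hK)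
  · rw [← hKP.card_mul_card]
    exact lt_mul_of_one_lt_right Nat.card_pos one_lt_card_P
  · have : Nontrivial K := .of_not_isCyclic hK
    exact Finite.one_lt_card
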